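/- arXiv:1701.01762 — 7 statements merged into one kernel-verified Lean document; each statement's English description precedes it below -/
import Mathlib

section
/- Let H be a group and σ an automorphism of H with σ ∘ σ = id. For γ ∈ H, the set H_γ := {(g₁,g₂) ∈ H^σ × H^σ : g₁⁻¹ · γ · g₂ = γ} is a subgroup of H^σ × H^σ, and the first projection (g₁,g₂) ↦ g₁ defines a group isomorphism from H_γ onto the centralizer {g ∈ H^σ : g · (γ · σ(γ)⁻¹) = (γ · σ(γ)⁻¹) · g} of γ·σ(γ)⁻¹ in H^σ. -/
/-- For a group `H` with involutive automorphism `σ`, the set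
`H_γ = {(g₁,g₂) ∈ H^σ × H^σ : g₁⁻¹ γ g₂ = γ}` is a subgroup of `H × H`, and the
first projection is a group isomorphism onto the centralizer of `γ · σ(γ)⁻¹` in `H^σ`. -/
theorem stmt0 {H : Type*} [Group H] (σ : H ≃* H) (hσ : ∀ h, σ (σ h) = h) (γ : H) :
    ∃ (S : Subgroup (H × H)) (C : Subgroup H),
      (∀ p : H × H, p ∈ S ↔ σ p.1 = p.1 ∧ σ p.2 = p.2 ∧ p.1⁻¹ * γ * p.2 = γ) ∧
      (∀ g : H, g ∈ C ↔ σ g = g ∧ g * (γ * (σ γ)⁻¹) = (γ * (σ γ)⁻¹) * g) ∧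
      ∃ e : S ≃* C, ∀ p : S, (e p : H) = (p : H × H).1 := by
  have key : ∀ a b : H, a⁻¹ * γ * b = γ ↔ SemiconjBy γ b a := by
    intro a b
    rw [SemiconjBy, mul_assoc, inv_mul_eq_iff_eq_mul]
  have keyσ : ∀ a b : H, σ a = a → σ b = b → SemiconjBy γ b a → SemiconjBy (σ γ) b a := by
    intro a b ha hb h
    have h2 := congrArg σ h.eq
    rw [map_mul, map_mul, ha, hb] at h2
    exact h2
  let S : Subgroup (H × H) :=
    { carrier := {p | σ p.1 = p.1 ∧ σ p.2 = p.2 ∧ SemiconjBy γ p.2 p.1}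
      one_mem' := by simp
      mul_mem' := by
        rintro p q ⟨h1, h2, h3⟩ ⟨k1, k2, k3⟩
        exact ⟨by simp [h1, k1], by simp [h2, k2], h3.mul_right k3⟩
      inv_mem' := by
        rintro p ⟨h1, h2, h3⟩
        exact ⟨by simp [h1], by simp [h2], h3.inv_right⟩ }
  let C : Subgroup H :=
    { carrier := {g | σ g = g ∧ SemiconjBy (γ * (σ γ)⁻¹) g g}
      one_mem' := by simp
      mul_mem' := by
        rintro p q ⟨h1, h3⟩ ⟨k1, k3⟩
        exact ⟨by simp [h1, k1], h3.mul_right k3⟩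
      inv_mem' := by
        rintro p ⟨h1, h3⟩
        exact ⟨by simp [h1], h3.inv_right⟩ }
  refine ⟨S, C, ?_, ?_, ?_⟩
  · intro p
    rw [key]
    exact Iff.rfl
  · intro g
    exact ⟨fun h => ⟨h.1, h.2.eq.symm⟩, fun h => ⟨h.1, h.2.symm⟩⟩
  · refine ⟨{ toFun := fun p => ⟨p.1.1, p.2.1, ?_⟩
              invFun := fun g => ⟨(g.1, γ⁻¹ * g.1 * γ), g.2.1, ?_, ?_⟩
              left_inv := ?_
              right_inv := fun g => rfl
              map_mul' := fun p q => rfl }, fun p => rfl⟩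
    · exact SemiconjBy.mul_left p.2.2.2
        (keyσ _ _ p.2.1 p.2.2.1 p.2.2.2).inv_symm_left
    · obtain ⟨g, h1, h2⟩ := g
      have h3 := h2.eq
      simp only [map_mul, map_inv, h1]
      have h4 : g * γ = γ * (σ γ)⁻¹ * g * σ γ := by rw [h3]; group
      rw [mul_assoc γ⁻¹, h4]; group
    · change γ * (γ⁻¹ * g.1 * γ) = g.1 * γ
      group
    · rintro ⟨⟨a, b⟩, h1, h2, h3⟩
      apply Subtype.ext
      apply Prod.ext
      · rfl
      · change γ⁻¹ * a * γ = b
        rw [mul_assoc, ← h3.eq]; group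
end

section
/- Let G be a group with commuting automorphisms σ, τ satisfying σ ∘ σ = id and τ ∘ τ = id, and set θ := σ ∘ τ. For δ ∈ G, the set G_δ := {(g₁,g₂) ∈ G^σ × G^θ : g₁⁻¹ · δ · g₂ = δ} is a subgroup of G^σ × G^θ, and the first projection (g₁,g₂) ↦ g₁ defines a group isomorphism from G_δ onto the τ-twisted centralizer C^τ := {g ∈ G^σ : g⁻¹ · (δ · θ(δ)⁻¹) · τ(g) = δ · θ(δ)⁻¹}. -/
/-- twisted version. `θ := σ ∘ τ`.  The set
`G_δ = {(g₁,g₂) ∈ G^σ × G^θ : g₁⁻¹ δ g₂ = δ}` is a subgroup of `G × G`, and the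
first projection is a group isomorphism onto the τ-twisted centralizer
`{g ∈ G^σ : g⁻¹ (δ θ(δ)⁻¹) τ(g) = δ θ(δ)⁻¹}`. -/
theorem stmt1 {G : Type*} [Group G] (σ τ : G ≃* G)
    (hσ : ∀ g, σ (σ g) = g) (hτ : ∀ g, τ (τ g) = g)
    (hcomm : ∀ g, σ (τ g) = τ (σ g)) (δ : G) :
    ∃ (S : Subgroup (G × G)) (C : Subgroup G),
      (∀ p : G × G, p ∈ S ↔ σ p.1 = p.1 ∧ σ (τ p.2) = p.2 ∧ p.1⁻¹ * δ * p.2 = δ) ∧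
      (∀ g : G, g ∈ C ↔ σ g = g ∧
        g⁻¹ * (δ * (σ (τ δ))⁻¹) * τ g = δ * (σ (τ δ))⁻¹) ∧
      ∃ e : S ≃* C, ∀ p : S, (e p : G) = (p : G × G).1 := by
  have key1 : ∀ a b c d : G, a⁻¹ * c * b = d ↔ c * b = a * d := by
    intro a b c d
    rw [mul_assoc, inv_mul_eq_iff_eq_mul]
  simp only [key1]
  let S : Subgroup (G × G) :=
    { carrier := {p | σ p.1 = p.1 ∧ σ (τ p.2) = p.2 ∧ δ * p.2 = p.1 * δ}
      one_mem' := by simp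
      mul_mem' := by
        rintro ⟨a, b⟩ ⟨c, d⟩ ⟨h1, h2, h3⟩ ⟨k1, k2, k3⟩
        simp only at h1 h2 h3 k1 k2 k3
        refine ⟨by simp [h1, k1], by simp [h2, k2], ?_⟩
        simp only [Prod.mk_mul_mk]
        rw [← mul_assoc, h3, mul_assoc, k3, mul_assoc]
      inv_mem' := by
        rintro ⟨a, b⟩ ⟨h1, h2, h3⟩
        simp only at h1 h2 h3
        refine ⟨by simp [h1], by simp [h2], ?_⟩
        simp only [Prod.inv_mk]
        rw [mul_inv_eq_iff_eq_mul, mul_assoc, h3, inv_mul_cancel_left] }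
  let C : Subgroup G :=
    { carrier := {g | σ g = g ∧ δ * (σ (τ δ))⁻¹ * τ g = g * (δ * (σ (τ δ))⁻¹)}
      one_mem' := by simp
      mul_mem' := by
        rintro a b ⟨h1, h2⟩ ⟨k1, k2⟩
        refine ⟨by simp [h1, k1], ?_⟩
        rw [map_mul, ← mul_assoc, h2, mul_assoc, k2, mul_assoc]
      inv_mem' := by
        rintro a ⟨h1, h2⟩
        refine ⟨by simp [h1], ?_⟩
        rw [map_inv, mul_inv_eq_iff_eq_mul, mul_assoc, h2, inv_mul_cancel_left] }
  refine ⟨S, C, fun _ => Iff.rfl, fun _ => Iff.rfl, ?_⟩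
  have fwd : ∀ p : S, (p : G × G).1 ∈ C := by
    rintro ⟨⟨a, b⟩, h1, h2, h3⟩
    simp only at h1 h2 h3
    refine ⟨h1, ?_⟩
    have h4 := congrArg (fun x => σ (τ x)) h3
    simp only [map_mul, h2] at h4
    rw [hcomm a, h1] at h4
    have h5 : τ a = σ (τ δ) * b * (σ (τ δ))⁻¹ := by rw [h4]; group
    rw [h5, ← mul_assoc a, ← h3]
    group
  have bwd : ∀ g : C, ((g : G), δ⁻¹ * g * δ) ∈ S := by
    rintro ⟨a, h1, h2⟩
    refine ⟨h1, ?_, by group⟩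
    simp only [map_mul, map_inv]
    rw [hcomm a, h1]
    have h5 : τ a = (δ * (σ (τ δ))⁻¹)⁻¹ * (a * (δ * (σ (τ δ))⁻¹)) := by
      rw [← h2]; group
    rw [h5]
    group
  refine ⟨{ toFun := fun p => ⟨_, fwd p⟩
            invFun := fun g => ⟨_, bwd g⟩
            left_inv := ?_
            right_inv := fun _ => rfl
            map_mul' := fun _ _ => rfl }, fun _ => rfl⟩
  rintro ⟨⟨a, b⟩, h1, h2, h3⟩
  simp only at h3
  apply Subtype.ext
  refine Prod.ext rfl ?_
  change δ⁻¹ * a * δ = b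
  rw [mul_assoc, ← h3, inv_mul_cancel_left]
end

section
/- Let H be a group and σ an automorphism of H with σ ∘ σ = id. For all γ, γ' ∈ H, the following are equivalent: (i) there exist g₁, g₂ ∈ H^σ with γ' = g₁ · γ · g₂⁻¹ (i.e. γ and γ' lie in the same (H^σ, H^σ)-double coset); (ii) there exists x ∈ H^σ with γ' · σ(γ')⁻¹ = x · (γ · σ(γ)⁻¹) · x⁻¹. In other words, the map γ ↦ γ · σ(γ)⁻¹ induces a well-defined injection from the double coset space H^σ \ H / H^σ into the set of H^σ-conjugacy orbits in H. -/
/-- γ, γ' lie in the same (H^σ, H^σ)-double coset iff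
`γ' σ(γ')⁻¹` and `γ σ(γ)⁻¹` are conjugate by an element of `H^σ`. -/
theorem stmt2 {H : Type*} [Group H] (σ : H ≃* H) (hσ : ∀ h, σ (σ h) = h) (γ γ' : H) :
    (∃ g₁ g₂ : H, σ g₁ = g₁ ∧ σ g₂ = g₂ ∧ γ' = g₁ * γ * g₂⁻¹) ↔
      ∃ x : H, σ x = x ∧ γ' * (σ γ')⁻¹ = x * (γ * (σ γ)⁻¹) * x⁻¹ := by
  constructor
  · rintro ⟨g₁, g₂, h₁, h₂, rfl⟩
    refine ⟨g₁, h₁, ?_⟩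
    simp only [map_mul, map_inv, h₁, h₂]
    group
  · rintro ⟨x, hx, h⟩
    refine ⟨x, γ'⁻¹ * x * γ, hx, ?_, by group⟩
    have h2 : (σ γ')⁻¹ = γ'⁻¹ * (x * (γ * (σ γ)⁻¹) * x⁻¹) := by
      rw [← h]; group
    simp only [map_mul, map_inv, hx, h2]
    group
end

section
/- Let G be a group with commuting automorphisms σ, τ satisfying σ ∘ σ = id and τ ∘ τ = id, and set θ := σ ∘ τ. For all δ, δ' ∈ G, the following are equivalent: (i) there exist g₁ ∈ G^σ and g₂ ∈ G^θ with δ' = g₁ · δ · g₂⁻¹ (i.e. δ and δ' lie in the same (G^σ, G^θ)-double coset); (ii) there exists x ∈ G^σ with δ' · θ(δ')⁻¹ = x · (δ · θ(δ)⁻¹) · τ(x)⁻¹. In other words, the map δ ↦ δ · θ(δ)⁻¹ induces a well-defined injection from the double coset space G^σ \ G / G^θ into the set of τ-twisted G^σ-conjugacy orbits in G. -/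
/-- δ, δ' lie in the same (G^σ, G^θ)-double coset (θ := σ ∘ τ) iff
`δ' θ(δ')⁻¹` and `δ θ(δ)⁻¹` are τ-twisted conjugate by an element of `G^σ`. -/
theorem stmt3 {G : Type*} [Group G] (σ τ : G ≃* G)
    (hσ : ∀ g, σ (σ g) = g) (hτ : ∀ g, τ (τ g) = g)
    (hcomm : ∀ g, σ (τ g) = τ (σ g)) (δ δ' : G) :
    (∃ g₁ g₂ : G, σ g₁ = g₁ ∧ σ (τ g₂) = g₂ ∧ δ' = g₁ * δ * g₂⁻¹) ↔
      ∃ x : G, σ x = x ∧ δ' * (σ (τ δ'))⁻¹ = x * (δ * (σ (τ δ))⁻¹) * (τ x)⁻¹ := by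
  constructor
  · rintro ⟨g₁, g₂, h1, h2, rfl⟩
    refine ⟨g₁, h1, ?_⟩
    have h3 : σ (τ g₁) = τ g₁ := by rw [hcomm, h1]
    simp only [map_mul, map_inv, h2, h3]
    group
  · rintro ⟨x, hx, h⟩
    have h3 : σ (τ x) = τ x := by rw [hcomm, hx]
    refine ⟨x, δ'⁻¹ * x * δ, hx, ?_, by group⟩
    simp only [map_mul, map_inv, h3]
    have h4 : (σ (τ δ'))⁻¹ = δ'⁻¹ * (x * (δ * (σ (τ δ))⁻¹) * (τ x)⁻¹) := by
      rw [← h]; group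
    rw [h4]; group
end

section
/- Let H be a group and σ an automorphism of H with σ ∘ σ = id, and let G := H × H with the automorphisms σ_G(x,y) := (σ(x), σ(y)), τ(x,y) := (y,x), and θ := σ_G ∘ τ, so θ(x,y) = (σ(y), σ(x)). Then the map (δ₁, δ₂) ↦ δ₁ · σ(δ₂)⁻¹ descends to a well-defined bijection from the double coset space G^{σ_G} \ G / G^θ onto the double coset space H^σ \ H / H^σ. Explicitly: (a) if (δ₁', δ₂') = g₁ · (δ₁, δ₂) · g₂⁻¹ with g₁ ∈ G^{σ_G} and g₂ ∈ G^θ, then δ₁' · σ(δ₂')⁻¹ ∈ H^σ · (δ₁ · σ(δ₂)⁻¹) · H^σ; (b) conversely, if δ₁' · σ(δ₂')⁻¹ ∈ H^σ · (δ₁ · σ(δ₂)⁻¹) · H^σ then (δ₁', δ₂') ∈ G^{σ_G} · (δ₁, δ₂) · G^θ; (c) every γ ∈ H arises, e.g. γ = δ₁ · σ(δ₂)⁻¹ for (δ₁, δ₂) = (γ, 1). -/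
/-- the split norm map `(δ₁,δ₂) ↦ δ₁ σ(δ₂)⁻¹` induces a bijection from
`G^{σ_G} \ (H × H) / G^θ` onto `H^σ \ H / H^σ`, where `G^{σ_G} = H^σ × H^σ` and
`G^θ = {(h, σ h)}`. Parts (a), (b), (c). -/
theorem stmt4 {H : Type*} [Group H] (σ : H ≃* H) (hσ : ∀ h, σ (σ h) = h) :
    (∀ δ₁ δ₂ δ₁' δ₂' a b c : H, σ a = a → σ b = b →
        δ₁' = a * δ₁ * c⁻¹ → δ₂' = b * δ₂ * (σ c)⁻¹ →
        ∃ h₁ h₂ : H, σ h₁ = h₁ ∧ σ h₂ = h₂ ∧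
          δ₁' * (σ δ₂')⁻¹ = h₁ * (δ₁ * (σ δ₂)⁻¹) * h₂) ∧
    (∀ δ₁ δ₂ δ₁' δ₂' h₁ h₂ : H, σ h₁ = h₁ → σ h₂ = h₂ →
        δ₁' * (σ δ₂')⁻¹ = h₁ * (δ₁ * (σ δ₂)⁻¹) * h₂ →
        ∃ a b c : H, σ a = a ∧ σ b = b ∧
          δ₁' = a * δ₁ * c⁻¹ ∧ δ₂' = b * δ₂ * (σ c)⁻¹) ∧
    (∀ γ : H, γ = γ * (σ (1 : H))⁻¹) := by
  refine ⟨?_, ?_, ?_⟩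
  · rintro δ₁ δ₂ δ₁' δ₂' a b c ha hb rfl rfl
    refine ⟨a, b⁻¹, ha, by rw [map_inv, hb], ?_⟩
    simp only [map_mul, map_inv, hσ, hb]
    group
  · intro δ₁ δ₂ δ₁' δ₂' h₁ h₂ e₁ e₂ h
    refine ⟨h₁, h₂⁻¹, δ₁'⁻¹ * h₁ * δ₁, e₁, by rw [map_inv, e₂], by group, ?_⟩
    have k : σ δ₂' = (h₁ * (δ₁ * (σ δ₂)⁻¹) * h₂)⁻¹ * δ₁' := by
      rw [← h]; group
    have k2 := congrArg σ k
    rw [hσ] at k2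
    rw [k2]
    simp only [map_mul, map_inv, hσ, e₁, e₂]
    group
  · intro γ
    simp
end

section
/- Let H be a group and σ an automorphism of H with σ ∘ σ = id, and let G := H × H with automorphisms σ_G(x,y) := (σ(x), σ(y)), τ(x,y) := (y,x), and θ := σ_G ∘ τ. Fix (δ₁, δ₂) ∈ G and set γ := δ₁ · σ(δ₂)⁻¹. Then the set G_{(δ₁,δ₂)} := {(x, y) ∈ G^{σ_G} × G^θ : x⁻¹ · (δ₁,δ₂) · y = (δ₁,δ₂)} is a subgroup, every element of it has the form ((g₁,g₂), (g₃, σ(g₃))) with g₁, g₂ ∈ H^σ and g₃ ∈ H, and the map ((g₁,g₂), (g₃, σ(g₃))) ↦ (g₁, g₂) is a group isomorphism from G_{(δ₁,δ₂)} onto H_γ := {(g₁,g₂) ∈ H^σ × H^σ : g₁⁻¹ · γ · g₂ = γ}. -/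
theorem aux_iff {H : Type*} [Group H] (a b c : H) : a⁻¹ * c * b = c ↔ c * b = a * c := by
  rw [mul_assoc, inv_mul_eq_iff_eq_mul]

theorem aux_mul {H : Type*} [Group H] {a b a' b' c : H} (h : c * b = a * c)
    (h' : c * b' = a' * c) : c * (b * b') = a * a' * c := by
  rw [← mul_assoc, h, mul_assoc, h', mul_assoc]

theorem aux_inv {H : Type*} [Group H] {a b c : H} (h : c * b = a * c) :
    c * b⁻¹ = a⁻¹ * c := by
  rw [mul_inv_eq_iff_eq_mul, mul_assoc, h, inv_mul_cancel_left]


/-- with `G = H × H`, `σ_G(x,y) = (σ x, σ y)`, `θ(x,y) = (σ y, σ x)`,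
and `γ := δ₁ σ(δ₂)⁻¹`, the set `G_{(δ₁,δ₂)}` is a subgroup, its elements have the
form `((g₁,g₂),(g₃,σ g₃))`, and `((g₁,g₂),(g₃,σ g₃)) ↦ (g₁,g₂)` is a group
isomorphism onto `H_γ`. -/
theorem stmt5 {H : Type*} [Group H] (σ : H ≃* H) (hσ : ∀ h, σ (σ h) = h) (δ₁ δ₂ : H) :
    ∃ (S : Subgroup ((H × H) × (H × H))) (T : Subgroup (H × H)),
      (∀ p : (H × H) × (H × H), p ∈ S ↔
        (σ p.1.1 = p.1.1 ∧ σ p.1.2 = p.1.2) ∧ (p.2.2 = σ p.2.1) ∧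
        p.1.1⁻¹ * δ₁ * p.2.1 = δ₁ ∧ p.1.2⁻¹ * δ₂ * p.2.2 = δ₂) ∧
      (∀ q : H × H, q ∈ T ↔ σ q.1 = q.1 ∧ σ q.2 = q.2 ∧
        q.1⁻¹ * (δ₁ * (σ δ₂)⁻¹) * q.2 = δ₁ * (σ δ₂)⁻¹) ∧
      ∃ e : S ≃* T, ∀ p : S, (e p : H × H) = (p : (H × H) × (H × H)).1 := by
  simp only [aux_iff]
  let S : Subgroup ((H × H) × (H × H)) :=
    { carrier := {p | (σ p.1.1 = p.1.1 ∧ σ p.1.2 = p.1.2) ∧ (p.2.2 = σ p.2.1) ∧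
        δ₁ * p.2.1 = p.1.1 * δ₁ ∧ δ₂ * p.2.2 = p.1.2 * δ₂}
      one_mem' := by simp
      mul_mem' := by
        rintro p q ⟨⟨h1, h2⟩, h3, h4, h5⟩ ⟨⟨k1, k2⟩, k3, k4, k5⟩
        exact ⟨⟨by simp [h1, k1], by simp [h2, k2]⟩, by simp [h3, k3],
          aux_mul h4 k4, aux_mul h5 k5⟩
      inv_mem' := by
        rintro p ⟨⟨h1, h2⟩, h3, h4, h5⟩
        exact ⟨⟨by simp [h1], by simp [h2]⟩, by simp [h3], aux_inv h4, aux_inv h5⟩ }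
  let T : Subgroup (H × H) :=
    { carrier := {q | σ q.1 = q.1 ∧ σ q.2 = q.2 ∧
        δ₁ * (σ δ₂)⁻¹ * q.2 = q.1 * (δ₁ * (σ δ₂)⁻¹)}
      one_mem' := by simp
      mul_mem' := by
        rintro p q ⟨h1, h2, h3⟩ ⟨k1, k2, k3⟩
        exact ⟨by simp [h1, k1], by simp [h2, k2], aux_mul h3 k3⟩
      inv_mem' := by
        rintro p ⟨h1, h2, h3⟩
        exact ⟨by simp [h1], by simp [h2], aux_inv h3⟩ }
  refine ⟨S, T, fun p => Iff.rfl, fun q => Iff.rfl, ?_⟩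
  have hST : ∀ p : S, p.1.1 ∈ T := by
    rintro ⟨⟨⟨a, b⟩, ⟨c, d⟩⟩, ⟨h1, h2⟩, h3, h4, h5⟩
    refine ⟨h1, h2, ?_⟩
    dsimp only at *
    have h6 : σ δ₂ * c = b * σ δ₂ := by
      have := congrArg σ h5
      rwa [map_mul, map_mul, h3, hσ, h2] at this
    have h7 : (σ δ₂)⁻¹ * b = c * (σ δ₂)⁻¹ := by
      rw [inv_mul_eq_iff_eq_mul, ← mul_assoc, h6, mul_inv_cancel_right]
    rw [mul_assoc, h7, ← mul_assoc, h4, mul_assoc]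
  have hTS : ∀ q : T, (q.1, (δ₁⁻¹ * q.1.1 * δ₁, σ (δ₁⁻¹ * q.1.1 * δ₁))) ∈ S := by
    rintro ⟨⟨a, b⟩, h1, h2, h3⟩
    refine ⟨⟨h1, h2⟩, rfl, ?_, ?_⟩
    · simp [mul_assoc]
    dsimp only at *
    have h4 : δ₁⁻¹ * a * δ₁ = (σ δ₂)⁻¹ * b * σ δ₂ := by
      have : a = δ₁ * (σ δ₂)⁻¹ * b * (δ₁ * (σ δ₂)⁻¹)⁻¹ := by
        rw [h3, mul_inv_cancel_right]
      rw [this]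
      group
    rw [h4]
    simp [hσ, h2, mul_assoc]
  refine ⟨{ toFun := fun p => ⟨p.1.1, hST p⟩
            invFun := fun q => ⟨_, hTS q⟩
            left_inv := ?_
            right_inv := fun q => rfl
            map_mul' := fun p q => rfl }, fun p => rfl⟩
  rintro ⟨⟨⟨a, b⟩, ⟨c, d⟩⟩, ⟨h1, h2⟩, h3, h4, h5⟩
  dsimp only at *
  have h6 : δ₁⁻¹ * a * δ₁ = c := by rw [mul_assoc, ← h4, inv_mul_cancel_left]
  apply Subtype.ext
  have h7 : d = σ c := h3
  simp only [h6, h7]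
end

section
/- Let H be a group and σ an automorphism of H with σ ∘ σ = id. Suppose x, x' ∈ H satisfy x' · σ(x')⁻¹ = x · σ(x)⁻¹ and x' · σ(x') = σ(x') · x' (i.e. x' commutes with σ(x')). Then the element g := x⁻¹ · x' is fixed by σ, and x · σ(x)⁻¹ = g⁻¹ · (σ(x)⁻¹ · x) · g; in particular x · σ(x)⁻¹ and σ(x)⁻¹ · x are conjugate by an element of H^σ. -/
/-- if `x' σ(x')⁻¹ = x σ(x)⁻¹` and `x'` commutes with `σ(x')`, then
`g := x⁻¹ x'` is σ-fixed and `x σ(x)⁻¹ = g⁻¹ (σ(x)⁻¹ x) g`. -/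
theorem stmt10 {H : Type*} [Group H] (σ : H ≃* H) (hσ : ∀ h, σ (σ h) = h)
    (x x' : H) (h1 : x' * (σ x')⁻¹ = x * (σ x)⁻¹) (h2 : x' * σ x' = σ x' * x') :
    σ (x⁻¹ * x') = x⁻¹ * x' ∧
      x * (σ x)⁻¹ = (x⁻¹ * x')⁻¹ * ((σ x)⁻¹ * x) * (x⁻¹ * x') := by
  have hc : (σ x')⁻¹ * x' = x' * (σ x')⁻¹ := by
    rw [inv_mul_eq_iff_eq_mul, ← mul_assoc, ← h2, mul_inv_cancel_right]
  constructor
  · have hx : x' = x * (σ x)⁻¹ * σ x' := by rw [← h1, inv_mul_cancel_right]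
    calc σ (x⁻¹ * x') = x⁻¹ * (x * (σ x)⁻¹ * σ x') := by rw [map_mul, map_inv]; group
      _ = x⁻¹ * x' := by rw [← hx]
  · calc x * (σ x)⁻¹ = (σ x')⁻¹ * x' := by rw [hc, h1]
      _ = x'⁻¹ * (x' * (σ x')⁻¹) * x' := by group
      _ = x'⁻¹ * (x * (σ x)⁻¹) * x' := by rw [h1]
      _ = (x⁻¹ * x')⁻¹ * ((σ x)⁻¹ * x) * (x⁻¹ * x') := by group
end
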